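/- For every nonzero homogeneous polynomial z ∈ k[X] of degree r ≥ 1 with d(z) = 0 that is an e-eigenvector, there exist polynomials c_0, c_1, …, c_n ∈ k[X], where each c_i is either zero or a nonzero e-eigenvector satisfying d(c_i) = 0 with e-eigenvalue w_i ≥ n−i, such that r·z = Σ_{i=0}^{n} τ_{n−i}(c_i); that is, every element of the kernel of d is a sum of Casimir elements τ_j applied to kernel elements of strictly smaller degree. -/

import Mathlib

open MvPolynomial Finset

/-- The Weitzenböck derivation `d` on `k[x_0,…,x_n]`: `d(x_i) = x_{i-1}` for
`1 ≤ i ≤ n` and `d(x_0) = 0`. -/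
noncomputable def weitz (k : Type*) [Field k] [CharZero k] (n : ℕ) :
    Derivation k (MvPolynomial (Fin (n + 1)) k) (MvPolynomial (Fin (n + 1)) k) :=
  mkDerivation k (fun i : Fin (n + 1) =>
    if _ : (i : ℕ) = 0 then 0
    else X (⟨(i : ℕ) - 1, by have := i.isLt; omega⟩ : Fin (n + 1)))

/-- The derivation `d̂` on `k[x_0,…,x_n]`: `d̂(x_i) = (i+1)(n−i)·x_{i+1}` for
`0 ≤ i ≤ n−1` and `d̂(x_n) = 0`. -/
noncomputable def dhat (k : Type*) [Field k] [CharZero k] (n : ℕ) :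
    Derivation k (MvPolynomial (Fin (n + 1)) k) (MvPolynomial (Fin (n + 1)) k) :=
  mkDerivation k (fun i : Fin (n + 1) =>
    if h : (i : ℕ) = n then 0
    else ((((i : ℕ) + 1) * (n - (i : ℕ)) : ℕ) : k) •
      X (⟨(i : ℕ) + 1, by have := i.isLt; omega⟩ : Fin (n + 1)))

/-- The derivation `e` on `k[x_0,…,x_n]`: `e(x_i) = (n−2i)·x_i`. -/
noncomputable def ee (k : Type*) [Field k] [CharZero k] (n : ℕ) :
    Derivation k (MvPolynomial (Fin (n + 1)) k) (MvPolynomial (Fin (n + 1)) k) :=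
  mkDerivation k (fun i : Fin (n + 1) => ((n : ℤ) - 2 * (i : ℕ)) • X i)

/-- The Casimir element `τ_i(z) = Σ_{k=0}^{i} (−1)^k ((w−k)!/(k!·w!)) x_{i−k} d̂^k(z)`
associated to a kernel element `z` of weight `w`, for `i ≤ n`. -/
noncomputable def tau (k : Type*) [Field k] [CharZero k] (n w i : ℕ) (hi : i ≤ n)
    (z : MvPolynomial (Fin (n + 1)) k) : MvPolynomial (Fin (n + 1)) k :=
  ∑ j ∈ Finset.range (i + 1),
    ((-1 : k) ^ j * ((w - j).factorial : k) / ((j.factorial * w.factorial : ℕ) : k)) •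
      (X (⟨i - j, by omega⟩ : Fin (n + 1)) * (⇑(dhat k n))^[j] z)

/-!
The derivations `(e, -d, -d̂)` form an `sl₂`-triple, and `d z = 0` gives `∂ᵢ z = (-d)ⁱ ∂₀ z` and
`(-d)ⁿ⁺¹ ∂₀ z = 0`. Since `d̂` is locally nilpotent, `∂₀ z` is a sum of entries of normalised
lowering strings, the `j`-th entry of a string through some `cⱼ ∈ ker d` for each `j ≤ n`. The
weight of `cⱼ` is at least `j` because `dᵐ` is injective on vectors of weight `≤ -m`. Applying
`(-d)ⁱ` shifts every string by `i` places, so Euler's identity `r z = ∑ᵢ xᵢ ∂ᵢ z` collects the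
terms belonging to `cⱼ` into `τⱼ(cⱼ)`; the signs in `τⱼ` are those of `-d̂`.
-/

open LieModule Module

section Derivation

variable {R A σ : Type*} [CommRing R] [CommRing A] [Algebra R A]

theorem toEnd_pow_mul_eq_zero (D : Derivation R A A) {a b : ℕ} {p q : A}
    (hp : (toEnd R (Derivation R A A) A D ^ a) p = 0)
    (hq : (toEnd R (Derivation R A A) A D ^ b) q = 0) :
    (toEnd R (Derivation R A A) A D ^ (a + b)) (p * q) = 0 := by
  induction a generalizing p q b with
  | zero => simp_all
  | succ a iha =>
    induction b generalizing q with
    | zero => simp_all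
    | succ b ihb =>
      have hDp : (toEnd R (Derivation R A A) A D ^ (a + (b + 1))) (D p * q) = 0 :=
        iha (by rwa [pow_succ] at hp) hq
      have hDq : (toEnd R (Derivation R A A) A D ^ (a + 1 + b)) (p * D q) = 0 :=
        ihb (by rwa [pow_succ] at hq)
      rw [← add_assoc, pow_succ, End.mul_apply, toEnd_apply_apply, Derivation.bracket_eq_fun,
        D.leibniz, smul_eq_mul, smul_eq_mul, map_add, hDq, zero_add, mul_comm, add_right_comm,
        add_assoc, hDp]

theorem exists_toEnd_pow_eq_zero_of_X (D : Derivation R (MvPolynomial σ R) (MvPolynomial σ R))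
    (hX : ∀ i, ∃ N, (toEnd R _ (MvPolynomial σ R) D ^ N) (X i) = 0) (p : MvPolynomial σ R) :
    ∃ N, (toEnd R _ (MvPolynomial σ R) D ^ N) p = 0 := by
  induction p using MvPolynomial.induction_on with
  | C a => exact ⟨1, derivation_C D a⟩
  | add p q hp hq =>
    obtain ⟨a, ha⟩ := hp
    obtain ⟨b, hb⟩ := hq
    refine ⟨a + b, ?_⟩
    rw [map_add, End.pow_map_zero_of_le (Nat.le_add_right a b) ha,
      End.pow_map_zero_of_le (Nat.le_add_left b a) hb, add_zero]
  | mul_X p i hp =>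
    obtain ⟨a, ha⟩ := hp
    obtain ⟨b, hb⟩ := hX i
    exact ⟨a + b, toEnd_pow_mul_eq_zero D ha hb⟩

theorem toEnd_neg_pow_apply (D : Derivation R A A) (j : ℕ) (p : A) :
    (toEnd R (Derivation R A A) A (-D) ^ j) p = (-1 : R) ^ j • D^[j] p := by
  induction j with
  | zero => simp
  | succ j ih =>
    rw [pow_succ', End.mul_apply, ih, map_smul, Function.iterate_succ_apply', pow_succ]
    simp

theorem lie_pderiv_X (D : Derivation R (MvPolynomial σ R) (MvPolynomial σ R)) (i j : σ) :
    ⁅D, pderiv i⁆ (X j) = -pderiv i (D (X j)) := by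
  classical
  rw [Derivation.commutator_apply, pderiv_X, Pi.single_apply, apply_ite D, map_zero,
    Derivation.map_one_eq_zero, ite_self, zero_sub]

end Derivation

section Sl2

variable {R L M : Type*} [CommRing R] [LieRing L] [LieAlgebra R L] [AddCommGroup M] [Module R M]
  [LieRingModule L M] [LieModule R L M] {h e f : L} {μ : R} {v : M}

theorem isSl2Triple_neg_neg (t : IsSl2Triple h e f) : IsSl2Triple h (-e) (-f) where
  h_ne_zero := t.h_ne_zero
  lie_e_f := by rw [neg_lie, lie_neg, neg_neg, t.lie_e_f]
  lie_h_e_nsmul := by rw [lie_neg, t.lie_h_e_nsmul, smul_neg]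
  lie_h_f_nsmul := by rw [lie_neg, t.lie_h_f_nsmul, smul_neg]

theorem lie_h_lie_e (t : IsSl2Triple h e f) (hv : ⁅h, v⁆ = μ • v) :
    ⁅h, ⁅e, v⁆⁆ = (μ + 2) • ⁅e, v⁆ := by
  rw [leibniz_lie, t.lie_h_e_smul R, hv, smul_lie, lie_smul, add_smul, add_comm]

theorem lie_h_lie_f (t : IsSl2Triple h e f) (hv : ⁅h, v⁆ = μ • v) :
    ⁅h, ⁅f, v⁆⁆ = (μ - 2) • ⁅f, v⁆ := by
  rw [leibniz_lie, t.lie_lie_smul_f R, hv, neg_lie, smul_lie, lie_smul, sub_smul, neg_add_eq_sub]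

theorem lie_h_pow_toEnd_e (t : IsSl2Triple h e f) (hv : ⁅h, v⁆ = μ • v) (i : ℕ) :
    ⁅h, (toEnd R L M e ^ i) v⁆ = (μ + 2 * i) • (toEnd R L M e ^ i) v := by
  induction i with
  | zero => simpa using hv
  | succ i ih =>
    rw [pow_succ', End.mul_apply, toEnd_apply_apply, lie_h_lie_e t ih]
    push_cast
    ring_nf

theorem pow_toEnd_e_lie_f_eq_zero (t : IsSl2Triple h e f) (hv : ⁅h, v⁆ = μ • v) {q : ℕ}
    (hq : (toEnd R L M e ^ q) v = 0) : (toEnd R L M e ^ (q + 1)) ⁅f, v⁆ = 0 := by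
  induction q generalizing v μ with
  | zero => simp_all
  | succ q ih =>
    have hev : (toEnd R L M e ^ (q + 1)) ⁅f, ⁅e, v⁆⁆ = 0 :=
      ih (lie_h_lie_e t hv) (by rwa [pow_succ] at hq)
    rw [pow_succ, End.mul_apply, toEnd_apply_apply, leibniz_lie, t.lie_e_f, hv, map_add, hev,
      map_smul, hq, smul_zero, add_zero]

variable [IsDomain R] [CharZero R] [IsTorsionFree R M]

theorem exists_nat_of_pow_toEnd_f_eq_zero {t : IsSl2Triple h e f}
    (P : t.HasPrimitiveVectorWith v μ) (hf : ∃ N, (toEnd R L M f ^ N) v = 0) :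
    ∃ W : ℕ, μ = W := by
  obtain ⟨W, hW, hW'⟩ := Nat.exists_not_and_succ_of_not_zero_of_exists P.ne_zero hf
  have hcoeff := P.lie_e_pow_succ_toEnd_f W
  rw [hW', lie_zero, eq_comm, smul_eq_zero_iff_left hW, mul_eq_zero, sub_eq_zero] at hcoeff
  exact ⟨W, hcoeff.resolve_left (Nat.cast_add_one_ne_zero W)⟩

theorem eq_zero_of_weight_neg_of_pow_toEnd_e_eq_zero (t : IsSl2Triple h e f) {p q : ℕ}
    (hv : ⁅h, v⁆ = (-p : R) • v) (hf : ∃ N, (toEnd R L M f ^ N) v = 0)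
    (he : (toEnd R L M e ^ q) v = 0) (hqp : q ≤ p) : v = 0 := by
  obtain ⟨N, hN⟩ := hf
  induction N generalizing v p q with
  | zero => simpa using hN
  | succ N ih =>
    have hfv : ⁅f, v⁆ = 0 := by
      refine ih (p := p + 2) (q := q + 1) ?_ (pow_toEnd_e_lie_f_eq_zero t hv he) (by lia)
        (by rwa [pow_succ] at hN)
      rw [lie_h_lie_f t hv]
      push_cast
      ring_nf
    by_contra hv0
    have P : t.symm.HasPrimitiveVectorWith v (p : R) :=
      ⟨hv0, by rw [neg_lie, hv, neg_smul, neg_neg], hfv⟩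
    exact P.pow_toEnd_f_ne_zero_of_eq_nat rfl hqp he

theorem exists_nat_weight_of_pow_toEnd_e (t : IsSl2Triple h e f)
    (hf : ∀ m : M, ∃ N, (toEnd R L M f ^ N) m = 0) (hv : ⁅h, v⁆ = μ • v) {m : ℕ}
    (hm : (toEnd R L M e ^ m) v ≠ 0) (hm' : (toEnd R L M e ^ (m + 1)) v = 0) :
    ∃ W : ℕ, m ≤ W ∧ μ + 2 * m = W := by
  have P : t.HasPrimitiveVectorWith ((toEnd R L M e ^ m) v) (μ + 2 * m) :=
    ⟨hm, lie_h_pow_toEnd_e t hv m, by rwa [pow_succ'] at hm'⟩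
  obtain ⟨W, hW⟩ := exists_nat_of_pow_toEnd_f_eq_zero P (hf _)
  refine ⟨W, ?_, hW⟩
  by_contra! hlt
  obtain ⟨p, hp⟩ : ∃ p, p + W = 2 * m := ⟨2 * m - W, by lia⟩
  have hμ : μ = -p := by
    have : (p + W : R) = 2 * m := mod_cast hp
    linear_combination hW + this
  have hv0 : v = 0 :=
    eq_zero_of_weight_neg_of_pow_toEnd_e_eq_zero t (hμ ▸ hv) (hf v) hm' (by lia)
  exact hm (by rw [hv0, map_zero])

end Sl2

section LoweringString

variable {K L M : Type*} [Field K] [LieRing L] [LieAlgebra K L] [AddCommGroup M]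
  [Module K M] [LieRingModule L M] [LieModule K L M] {h e f : L} {c : M} {w : ℕ}

variable (K) in
/-- The normalised string `((w - j)! / (j! w!)) fʲ c` through a vector `c` of weight `w`. If `c` is
primitive and `j < w` then `e` maps the entry `j + 1` to the entry `j`; for `j > w` the truncated
subtraction makes the coefficient meaningless. -/
noncomputable def loweringString (f : L) (w : ℕ) (c : M) (j : ℕ) : M :=
  ((w - j).factorial / (j.factorial * w.factorial) : K) • (toEnd K L M f ^ j) c

theorem loweringString_zero_right (f : L) (w j : ℕ) : loweringString K f w (0 : M) j = 0 := by
  rw [loweringString, map_zero, smul_zero]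

theorem lie_h_loweringString (t : IsSl2Triple h e f) (hh : ⁅h, c⁆ = (w : K) • c)
    (he : ⁅e, c⁆ = 0) (j : ℕ) :
    ⁅h, loweringString K f w c j⁆ = (w - 2 * j : K) • loweringString K f w c j := by
  obtain rfl | hc := eq_or_ne c 0
  · simp only [loweringString_zero_right, lie_zero, smul_zero]
  have P : t.HasPrimitiveVectorWith c (w : K) := ⟨hc, hh, he⟩
  rw [loweringString, lie_smul, P.lie_h_pow_toEnd_f, smul_comm]

variable [CharZero K]

theorem loweringString_zero (f : L) (w : ℕ) (c : M) : loweringString K f w c 0 = c := by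
  have hw : (w.factorial : K) ≠ 0 := mod_cast w.factorial_ne_zero
  simp [loweringString, hw]

theorem lie_e_loweringString_succ (t : IsSl2Triple h e f) (hh : ⁅h, c⁆ = (w : K) • c)
    (he : ⁅e, c⁆ = 0) {j : ℕ} (hj : j < w) :
    ⁅e, loweringString K f w c (j + 1)⁆ = loweringString K f w c j := by
  obtain rfl | hc := eq_or_ne c 0
  · simp only [loweringString_zero_right, lie_zero]
  have P : t.HasPrimitiveVectorWith c (w : K) := ⟨hc, hh, he⟩
  have hfac (i : ℕ) : (i.factorial : K) ≠ 0 := mod_cast i.factorial_ne_zero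
  rw [loweringString, lie_smul, P.lie_e_pow_succ_toEnd_f, smul_smul, loweringString]
  congr 1
  obtain ⟨i, rfl⟩ := Nat.exists_eq_add_of_lt hj
  rw [show j + i + 1 - (j + 1) = i by lia, show j + i + 1 - j = i + 1 by lia,
    Nat.factorial_succ i, Nat.factorial_succ j]
  have hj1 : (j + 1 : K) ≠ 0 := mod_cast j.succ_ne_zero
  have := hfac (j + i + 1)
  have := hfac j
  push_cast
  field_simp
  ring

theorem pow_toEnd_e_loweringString (t : IsSl2Triple h e f) (hh : ⁅h, c⁆ = (w : K) • c)
    (he : ⁅e, c⁆ = 0) {i j : ℕ} (hij : i ≤ j) (hj : j ≤ w) :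
    (toEnd K L M e ^ i) (loweringString K f w c j) = loweringString K f w c (j - i) := by
  induction i with
  | zero => rfl
  | succ i ih =>
    rw [pow_succ', End.mul_apply, ih (by lia), show j - i = j - (i + 1) + 1 by lia,
      toEnd_apply_apply, lie_e_loweringString_succ t hh he (by lia)]

theorem pow_toEnd_e_loweringString_eq_zero (t : IsSl2Triple h e f) (hh : ⁅h, c⁆ = (w : K) • c)
    (he : ⁅e, c⁆ = 0) {i j : ℕ} (hij : j < i) (hj : j ≤ w) :
    (toEnd K L M e ^ i) (loweringString K f w c j) = 0 := by
  have hsucc : (toEnd K L M e ^ (j + 1)) (loweringString K f w c j) = 0 := by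
    rw [pow_succ', End.mul_apply, pow_toEnd_e_loweringString t hh he le_rfl hj, Nat.sub_self,
      loweringString_zero, toEnd_apply_apply, he]
  exact End.pow_map_zero_of_le hij hsucc

theorem exists_eq_sum_loweringString (t : IsSl2Triple h e f)
    (hf : ∀ u : M, ∃ N, (toEnd K L M f ^ N) u = 0) {μ : K} {m : ℕ} {v : M}
    (hv : ⁅h, v⁆ = μ • v) (hm : (toEnd K L M e ^ m) v = 0) :
    ∃ (c : Fin m → M) (wt : Fin m → ℕ),
      (∀ j, ⁅e, c j⁆ = 0 ∧ ⁅h, c j⁆ = (wt j : K) • c j ∧ (j : ℕ) ≤ wt j) ∧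
      v = ∑ j, loweringString K f (wt j) (c j) j := by
  induction m generalizing v with
  | zero => exact ⟨Fin.elim0, Fin.elim0, fun j ↦ j.elim0, by simpa using hm⟩
  | succ m ih =>
    set a := (toEnd K L M e ^ m) v with ha
    have hea : ⁅e, a⁆ = 0 := by rwa [pow_succ'] at hm
    obtain ⟨W, hmW, hW⟩ : ∃ W : ℕ, m ≤ W ∧ (a = 0 ∨ μ + 2 * m = W) := by
      by_cases ha0 : a = 0
      · exact ⟨m, le_rfl, .inl ha0⟩
      · obtain ⟨W, hmW, hW⟩ := exists_nat_weight_of_pow_toEnd_e t hf hv ha0 hm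
        exact ⟨W, hmW, .inr hW⟩
    have hha : ⁅h, a⁆ = (W : K) • a := by
      obtain ha0 | hW := hW
      · simp only [ha0, lie_zero, smul_zero]
      · rw [ha, lie_h_pow_toEnd_e t hv, hW]
    -- `v` and `s` have the same image under `eᵐ`, so `v - s` falls under the induction hypothesis.
    set s := loweringString K f W a m with hs
    have hhs : ⁅h, s⁆ = μ • s := by
      obtain ha0 | hW := hW
      · simp only [hs, ha0, loweringString_zero_right, lie_zero, smul_zero]
      · rw [hs, lie_h_loweringString t hha hea, ← hW, add_sub_cancel_right]
    have hes : (toEnd K L M e ^ m) (v - s) = 0 := by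
      rw [map_sub, pow_toEnd_e_loweringString t hha hea le_rfl hmW, Nat.sub_self,
        loweringString_zero, sub_self]
    obtain ⟨c, wt, hc, hsum⟩ := ih (by rw [lie_sub, hv, hhs, smul_sub]) hes
    refine ⟨Fin.snoc (α := fun _ ↦ M) c a, Fin.snoc (α := fun _ ↦ ℕ) wt W,
      fun j ↦ ?_, ?_⟩
    · cases j using Fin.lastCases with
      | last => simpa using ⟨hea, hha, hmW⟩
      | cast j => simpa using hc j
    · simp [Fin.sum_univ_castSucc, ← hsum, ← hs]

theorem exists_pow_toEnd_e_eq_sum_loweringString (t : IsSl2Triple h e f)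
    (hf : ∀ u : M, ∃ N, (toEnd K L M f ^ N) u = 0) {μ : K} {m : ℕ} {v : M}
    (hv : ⁅h, v⁆ = μ • v) (hm : (toEnd K L M e ^ m) v = 0) :
    ∃ (c : Fin m → M) (wt : Fin m → ℕ),
      (∀ j, ⁅e, c j⁆ = 0 ∧ ⁅h, c j⁆ = (wt j : K) • c j ∧ (j : ℕ) ≤ wt j) ∧
      ∀ i : Fin m, (toEnd K L M e ^ (i : ℕ)) v =
        ∑ j ∈ Ici i, loweringString K f (wt j) (c j) (j - i) := by
  obtain ⟨c, wt, hc, hsum⟩ := exists_eq_sum_loweringString t hf hv hm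
  refine ⟨c, wt, hc, fun i ↦ ?_⟩
  rw [hsum, map_sum, ← sum_subset (subset_univ (Ici i))]
  · refine sum_congr rfl fun j hj ↦ ?_
    obtain ⟨hec, hhc, hjw⟩ := hc j
    exact pow_toEnd_e_loweringString t hhc hec (Fin.le_def.mp (mem_Ici.mp hj)) hjw
  · intro j _ hj
    obtain ⟨hec, hhc, hjw⟩ := hc j
    exact pow_toEnd_e_loweringString_eq_zero t hhc hec (by simpa using hj) hjw

end LoweringString

section Weitzenboeck

variable {k : Type*} [Field k] [CharZero k] {n : ℕ}

theorem weitz_X_zero : weitz k n (X 0) = 0 := by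
  simp [weitz]

theorem weitz_X_succ (i : Fin n) : weitz k n (X i.succ) = X i.castSucc := by
  simp [weitz, Fin.castSucc, Fin.castAdd, Fin.castLE]

theorem dhat_X_last : dhat k n (X (Fin.last n)) = 0 := by
  simp [dhat]

theorem dhat_X_castSucc (i : Fin n) :
    dhat k n (X i.castSucc) = ((i + 1) * (n - i) : k) • X i.succ := by
  simp [dhat, i.is_lt.ne, Nat.cast_sub i.is_lt.le, Fin.succ]

theorem ee_X (i : Fin (n + 1)) : ee k n (X i) = (n - 2 * i : k) • X i := by
  simp [ee, ← Int.cast_smul_eq_zsmul k]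

theorem weitz_dhat_X (i : Fin (n + 1)) :
    weitz k n (dhat k n (X i)) = ((i + 1) * (n - i) : k) • X i := by
  cases i using Fin.lastCases with
  | last => simp [dhat_X_last]
  | cast i => simp [dhat_X_castSucc, weitz_X_succ]

theorem dhat_weitz_X (i : Fin (n + 1)) :
    dhat k n (weitz k n (X i)) = (i * (n - i + 1) : k) • X i := by
  cases i using Fin.cases with
  | zero => simp [weitz_X_zero]
  | succ i =>
    rw [weitz_X_succ, dhat_X_castSucc, Fin.val_succ]
    push_cast
    ring_nf

theorem lie_weitz_dhat : ⁅weitz k n, dhat k n⁆ = ee k n := by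
  refine derivation_ext fun i ↦ ?_
  rw [Derivation.commutator_apply, weitz_dhat_X, dhat_weitz_X, ee_X, ← sub_smul]
  ring_nf

theorem lie_ee_weitz : ⁅ee k n, weitz k n⁆ = 2 • weitz k n := by
  refine derivation_ext fun i ↦ ?_
  rw [Derivation.commutator_apply, ee_X, Derivation.map_smul, Derivation.smul_apply,
    ← Nat.cast_smul_eq_nsmul k]
  cases i using Fin.cases with
  | zero => simp [weitz_X_zero]
  | succ i =>
    rw [weitz_X_succ, ee_X, ← sub_smul, Fin.val_succ, Fin.val_castSucc]
    push_cast
    ring_nf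

theorem lie_ee_dhat : ⁅ee k n, dhat k n⁆ = -(2 • dhat k n) := by
  refine derivation_ext fun i ↦ ?_
  rw [Derivation.commutator_apply, ee_X, Derivation.map_smul, Derivation.neg_apply,
    Derivation.smul_apply, ← Nat.cast_smul_eq_nsmul k]
  cases i using Fin.lastCases with
  | last => simp [dhat_X_last]
  | cast i =>
    rw [dhat_X_castSucc, Derivation.map_smul, ee_X, smul_smul, smul_smul, smul_smul, ← sub_smul,
      ← neg_smul, Fin.val_succ, Fin.val_castSucc]
    push_cast
    ring_nf

theorem ee_ne_zero (hn : n ≠ 0) : ee k n ≠ 0 := by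
  intro h
  have hX : (n : k) • (X 0 : MvPolynomial (Fin (n + 1)) k) = 0 := by
    simpa [h] using (ee_X (k := k) (0 : Fin (n + 1))).symm
  exact (smul_ne_zero (Nat.cast_ne_zero.mpr hn) (X_ne_zero 0)) hX

theorem isSl2Triple_ee_weitz_dhat (hn : n ≠ 0) :
    IsSl2Triple (ee k n) (weitz k n) (dhat k n) :=
  ⟨ee_ne_zero hn, lie_weitz_dhat, lie_ee_weitz, lie_ee_dhat⟩

theorem exists_toEnd_neg_dhat_pow_eq_zero (p : MvPolynomial (Fin (n + 1)) k) :
    ∃ N, (toEnd k _ (MvPolynomial (Fin (n + 1)) k) (-dhat k n) ^ N) p = 0 := by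
  refine exists_toEnd_pow_eq_zero_of_X _ (fun i ↦ ?_) p
  induction i using Fin.reverseInduction with
  | last => exact ⟨1, by simp [dhat_X_last]⟩
  | cast i ih =>
    obtain ⟨N, hN⟩ := ih
    refine ⟨N + 1, ?_⟩
    rw [pow_succ, End.mul_apply, toEnd_apply_apply, Derivation.bracket_eq_fun,
      Derivation.neg_apply, dhat_X_castSucc, map_neg, map_smul, hN, smul_zero, neg_zero]

theorem lie_neg_weitz_pderiv_castSucc (i : Fin n) :
    ⁅-weitz k n, pderiv (R := k) i.castSucc⁆ = pderiv i.succ := by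
  refine derivation_ext fun j ↦ ?_
  rw [lie_pderiv_X]
  cases j using Fin.cases with
  | zero => simp [weitz_X_zero]
  | succ j => simp [weitz_X_succ, pderiv_X, Pi.single_apply]

theorem lie_neg_weitz_pderiv_last : ⁅-weitz k n, pderiv (R := k) (Fin.last n)⁆ = 0 := by
  refine derivation_ext fun j ↦ ?_
  rw [lie_pderiv_X]
  cases j using Fin.cases with
  | zero => simp [weitz_X_zero]
  | succ j => simp [weitz_X_succ, pderiv_X]

theorem lie_ee_pderiv (i : Fin (n + 1)) :
    ⁅ee k n, pderiv (R := k) i⁆ = (2 * i - n : k) • pderiv i := by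
  refine derivation_ext fun j ↦ ?_
  rw [lie_pderiv_X, ee_X, Derivation.map_smul, Derivation.smul_apply, ← neg_smul, neg_sub]
  obtain rfl | hj := eq_or_ne j i
  · rfl
  · rw [pderiv_X_of_ne hj, smul_zero, smul_zero]

variable {z : MvPolynomial (Fin (n + 1)) k}

theorem ee_pderiv_zero {μ : k} (he : ee k n z = μ • z) :
    ee k n (pderiv 0 z) = (μ - n) • pderiv 0 z := by
  have hcomm := congr($(lie_ee_pderiv (k := k) (0 : Fin (n + 1))) z)
  rw [Derivation.commutator_apply, he, Derivation.map_smul, Derivation.smul_apply,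
    sub_eq_iff_eq_add, ← add_smul] at hcomm
  rw [hcomm]
  simp [neg_add_eq_sub]

theorem pow_toEnd_neg_weitz_pderiv_zero (hd : weitz k n z = 0) (i : Fin (n + 1)) :
    (toEnd k _ (MvPolynomial (Fin (n + 1)) k) (-weitz k n) ^ (i : ℕ)) (pderiv 0 z) =
      pderiv i z := by
  induction i using Fin.induction with
  | zero => rfl
  | succ i ih =>
    have hcomm := congr($(lie_neg_weitz_pderiv_castSucc (k := k) i) z)
    rw [Derivation.commutator_apply, Derivation.neg_apply _ z, hd, neg_zero, map_zero,
      sub_zero] at hcomm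
    rw [Fin.val_succ, pow_succ', End.mul_apply, ← Fin.val_castSucc, ih, ← hcomm]
    rfl

theorem pow_toEnd_neg_weitz_pderiv_zero_eq_zero (hd : weitz k n z = 0) :
    (toEnd k _ (MvPolynomial (Fin (n + 1)) k) (-weitz k n) ^ (n + 1)) (pderiv 0 z) = 0 := by
  have hcomm := congr($(lie_neg_weitz_pderiv_last (k := k) (n := n)) z)
  rw [Derivation.commutator_apply, Derivation.neg_apply _ z, hd, neg_zero, map_zero,
    sub_zero] at hcomm
  have hlast := pow_toEnd_neg_weitz_pderiv_zero hd (Fin.last n)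
  rw [Fin.val_last] at hlast
  rw [pow_succ', End.mul_apply, hlast]
  exact hcomm

theorem weitz_zero : weitz k 0 = 0 :=
  derivation_ext fun i ↦ by rw [Fin.fin_one_eq_zero i, weitz_X_zero, Derivation.zero_apply]

theorem ee_zero : ee k 0 = 0 :=
  derivation_ext fun i ↦ by simp [ee_X]

theorem exists_pderiv_eq_sum_loweringString {μ : k} (hd : weitz k n z = 0)
    (he : ee k n z = μ • z) :
    ∃ (c : Fin (n + 1) → MvPolynomial (Fin (n + 1)) k) (wt : Fin (n + 1) → ℕ),
      (∀ j, weitz k n (c j) = 0 ∧ ee k n (c j) = (wt j : k) • c j ∧ (j : ℕ) ≤ wt j) ∧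
      ∀ i, pderiv i z = ∑ j ∈ Ici i, loweringString k (-dhat k n) (wt j) (c j) (j - i) := by
  obtain rfl | hn := eq_or_ne n 0
  -- For `n = 0` all three derivations vanish, whereas `IsSl2Triple` demands `h ≠ 0`.
  · refine ⟨fun _ ↦ pderiv 0 z, 0, fun j ↦ ?_, fun i ↦ ?_⟩
    · simp [weitz_zero, ee_zero]
    · simp [Fin.fin_one_eq_zero i, loweringString_zero]
  · have t := isSl2Triple_neg_neg (isSl2Triple_ee_weitz_dhat (k := k) hn)
    obtain ⟨c, wt, hc, hsum⟩ := exists_pow_toEnd_e_eq_sum_loweringString t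
      exists_toEnd_neg_dhat_pow_eq_zero (ee_pderiv_zero he)
      (pow_toEnd_neg_weitz_pderiv_zero_eq_zero hd)
    refine ⟨c, wt, fun j ↦ ?_, fun i ↦ ?_⟩
    · simpa using hc j
    · rw [← pow_toEnd_neg_weitz_pderiv_zero hd, hsum]

theorem tau_eq_sum_X_mul_loweringString (j : Fin (n + 1)) (w : ℕ)
    (c : MvPolynomial (Fin (n + 1)) k) :
    tau k n w j j.is_le c = ∑ i ∈ Iic j, X i * loweringString k (-dhat k n) w c (j - i) := by
  rw [tau]
  refine sum_bij' (fun l _ ↦ (⟨j - l, by lia⟩ : Fin (n + 1))) (fun i _ ↦ j - i) ?_ ?_ ?_ ?_ ?_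
  · exact fun l _ ↦ mem_Iic.mpr (Nat.sub_le j l)
  · exact fun i _ ↦ mem_range_succ_iff.mpr (Nat.sub_le j i)
  · exact fun l hl ↦ Nat.sub_sub_self (mem_range_succ_iff.mp hl)
  · exact fun i hi ↦ Fin.ext (Nat.sub_sub_self (Fin.le_def.mp (mem_Iic.mp hi)))
  · intro l hl
    rw [loweringString, Nat.sub_sub_self (mem_range_succ_iff.mp hl), toEnd_neg_pow_apply,
      smul_smul, mul_smul_comm]
    congr 1
    push_cast
    ring

theorem smul_eq_sum_tau {r : ℕ} (hhom : z.IsHomogeneous r)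
    {c : Fin (n + 1) → MvPolynomial (Fin (n + 1)) k}
    {wt : Fin (n + 1) → ℕ}
    (hz : ∀ i, pderiv i z = ∑ j ∈ Ici i, loweringString k (-dhat k n) (wt j) (c j) (j - i)) :
    r • z = ∑ j, tau k n (wt j) j j.is_le (c j) := by
  simp_rw [← hhom.sum_X_mul_pderiv, hz, mul_sum, tau_eq_sum_X_mul_loweringString]
  exact sum_comm' (by simp)

end Weitzenboeck

/-- Every nonzero homogeneous isobaric kernel element `z` of
degree `r ≥ 1` decomposes as `r·z = Σ_{i=0}^{n} τ_{n−i}(c_i)` where each `c_i` is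
zero or a kernel element that is an `e`-eigenvector of eigenvalue `w_i ≥ n−i`. -/
theorem kernel_element_decomposition (k : Type*) [Field k] [CharZero k] (n : ℕ)
    (z : MvPolynomial (Fin (n + 1)) k) (hz0 : z ≠ 0) (r : ℕ) (hr : 1 ≤ r)
    (hhom : z.IsHomogeneous r) (w : ℕ)
    (hd : weitz k n z = 0) (he : ee k n z = (w : k) • z) :
    ∃ (c : Fin (n + 1) → MvPolynomial (Fin (n + 1)) k) (wt : Fin (n + 1) → ℕ),
      (∀ i : Fin (n + 1),
        weitz k n (c i) = 0 ∧ ee k n (c i) = (wt i : k) • c i ∧ n - (i : ℕ) ≤ wt i) ∧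
      r • z = ∑ i : Fin (n + 1), tau k n (wt i) (n - (i : ℕ)) (by omega) (c i) := by
  obtain ⟨c, wt, hc, hz⟩ := exists_pderiv_eq_sum_loweringString hd he
  refine ⟨fun i ↦ c i.rev, fun i ↦ wt i.rev, fun i ↦ ?_, ?_⟩
  · simpa [Fin.val_rev] using hc i.rev
  · rw [smul_eq_sum_tau hhom hz, ← Equiv.sum_comp Fin.revPerm]
    simp [Fin.val_rev]
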